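/- Let W be a 6-dimensional vector space over a field k of characteristic zero with basis x₁,…,x₆, and set φ₁ = x₁∧x₂ + x₃∧x₄, φ₂ = x₁∧x₅ + x₂∧x₃ + x₄∧x₆. Then (αφ₁ + φ₂)∧(αφ₁ + φ₂)∧(αφ₁ + φ₂) ≠ 0 for every α ∈ k; i.e., every bivector on the affine line φ₂ + kφ₁ has rank 6, while φ₁ has rank 4. -/

import Mathlib

open ExteriorAlgebra

/-!
Completing the two terms of `αφ₁` that share a factor with `φ₂` turns the bivector into a sum of
three decomposable ones,
`αφ₁ + φ₂ = x₁∧(x₅ + αx₂) + x₂∧x₃ + x₄∧(x₆ - αx₃)`.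
Decomposable bivectors are central of square zero, so the `r`-th power of a sum of `r` of them is
`r!` times their product and the next power vanishes. In the product of the three summands above
the corrections `αx₂` and `αx₃` meet the factors `x₂` and `x₃` again, so the cube is
`-6 x₁∧⋯∧x₆` for every `α`.
-/

section SquareZero

variable {A : Type*} [Semiring A]

theorem add_pow_succ_of_mul_self_eq_zero {a b : A} (hab : Commute a b) (ha : a * a = 0) (n : ℕ) :
    (a + b) ^ (n + 1) = (n + 1) • (a * b ^ n) + b ^ (n + 1) := by
  induction n with
  | zero => simp
  | succ n ih =>
    have ha_left : a * ((n + 1) • (a * b ^ n)) = 0 := by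
      rw [mul_smul_comm, ← mul_assoc, ha, zero_mul, smul_zero]
    have hb_left : b * ((n + 1) • (a * b ^ n)) = (n + 1) • (a * b ^ (n + 1)) := by
      rw [mul_smul_comm, hab.symm.left_comm, ← pow_succ']
    rw [pow_succ' (a + b), ih, add_mul, mul_add, mul_add, ha_left, hb_left, zero_add,
      ← pow_succ' b, ← add_assoc, succ_nsmul' _ (n + 1)]

theorem list_sum_pow_length_succ_eq_zero {l : List A} (hcomm : l.Pairwise Commute)
    (hsq : ∀ a ∈ l, a * a = 0) : l.sum ^ (l.length + 1) = 0 := by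
  induction l with
  | nil => simp
  | cons a l ih =>
    rw [List.pairwise_cons] at hcomm
    rw [List.forall_mem_cons] at hsq
    rw [List.sum_cons, List.length_cons, add_pow_succ_of_mul_self_eq_zero
      (Commute.list_sum_right a l hcomm.1) hsq.1, pow_succ _ (l.length + 1),
      ih hcomm.2 hsq.2, mul_zero, smul_zero, zero_mul, add_zero]

theorem list_sum_pow_length_eq_factorial_smul_prod {l : List A} (hcomm : l.Pairwise Commute)
    (hsq : ∀ a ∈ l, a * a = 0) : l.sum ^ l.length = l.length.factorial • l.prod := by
  induction l with
  | nil => simp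
  | cons a l ih =>
    rw [List.pairwise_cons] at hcomm
    rw [List.forall_mem_cons] at hsq
    rw [List.sum_cons, List.length_cons, add_pow_succ_of_mul_self_eq_zero
      (Commute.list_sum_right a l hcomm.1) hsq.1,
      list_sum_pow_length_succ_eq_zero hcomm.2 hsq.2, ih hcomm.2 hsq.2, add_zero, mul_smul_comm,
      smul_smul, List.prod_cons, Nat.factorial_succ]

end SquareZero

section DecomposableBivectors

variable {R M : Type*} [CommRing R] [AddCommGroup M] [Module R M]

theorem ι_mul_ι_eq_neg (x y : M) : ι R x * ι R y = -(ι R y * ι R x) :=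
  eq_neg_of_add_eq_zero_left (ι_add_mul_swap x y)

theorem ι_mul_eq_involute_mul_ι (x : M) (y : ExteriorAlgebra R M) :
    ι R x * y = CliffordAlgebra.involute y * ι R x := by
  induction y using ExteriorAlgebra.induction with
  | algebraMap r => rw [AlgHom.commutes, Algebra.commutes]
  | ι z => rw [CliffordAlgebra.involute_ι, neg_mul, ι_mul_ι_eq_neg]
  | mul a b ha hb => rw [map_mul, ← mul_assoc, ha, mul_assoc, hb, mul_assoc]
  | add a b ha hb => rw [map_add, mul_add, ha, hb, add_mul]

theorem commute_ι_mul_ι (a b : M) (y : ExteriorAlgebra R M) : Commute (ι R a * ι R b) y := by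
  rw [commute_iff_eq, mul_assoc, ι_mul_eq_involute_mul_ι b, ← mul_assoc,
    ι_mul_eq_involute_mul_ι a, CliffordAlgebra.involute_involute, mul_assoc]

theorem ι_mul_mul_ι_self (x : M) (y : ExteriorAlgebra R M) : ι R x * y * ι R x = 0 := by
  rw [ι_mul_eq_involute_mul_ι, mul_assoc, ι_sq_zero, mul_zero]

theorem ι_mul_ι_mul_self (a b : M) : ι R a * ι R b * (ι R a * ι R b) = 0 := by
  rw [← mul_assoc, ι_mul_mul_ι_self, zero_mul]

theorem sum_ι_mul_ι_pow_length_succ_eq_zero (l : List (M × M)) :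
    (l.map fun p => ι R p.1 * ι R p.2).sum ^ (l.length + 1) = 0 := by
  have h := list_sum_pow_length_succ_eq_zero (l := l.map fun p => ι R p.1 * ι R p.2)
    (List.pairwise_map.2 <| List.pairwise_of_forall fun p _ => commute_ι_mul_ι p.1 p.2 _)
    (List.forall_mem_map.2 fun p _ => ι_mul_ι_mul_self p.1 p.2)
  rwa [List.length_map] at h

theorem sum_ι_mul_ι_pow_length (l : List (M × M)) :
    (l.map fun p => ι R p.1 * ι R p.2).sum ^ l.length =
      l.length.factorial • (l.map fun p => ι R p.1 * ι R p.2).prod := by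
  have h := list_sum_pow_length_eq_factorial_smul_prod (l := l.map fun p => ι R p.1 * ι R p.2)
    (List.pairwise_map.2 <| List.pairwise_of_forall fun p _ => commute_ι_mul_ι p.1 p.2 _)
    (List.forall_mem_map.2 fun p _ => ι_mul_ι_mul_self p.1 p.2)
  rwa [List.length_map] at h

theorem smul_ιMulti_basis_eq_zero_iff {n : ℕ} (b : Module.Basis (Fin n) R M) {c : R} :
    c • ιMulti R n b = 0 ↔ c = 0 := by
  refine ⟨fun h => ?_, fun h => by rw [h, zero_smul]⟩
  have hdet := congrArg (liftAlternating (R := R) (Pi.single n b.det)) h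
  rwa [map_smul, liftAlternating_apply_ιMulti, Pi.single_eq_same, b.det_self, smul_eq_mul,
    mul_one, map_zero] at hdet

end DecomposableBivectors

section AffineLine

variable {R M : Type*} [CommRing R] [AddCommGroup M] [Module R M]

variable (R) in
/-- The bivector `φ₁ = x₁∧x₂ + x₃∧x₄` directing the affine line, with indices shifted to start
from `0`. -/
def lineDirection (x : Fin 6 → M) : ExteriorAlgebra R M :=
  ι R (x 0) * ι R (x 1) + ι R (x 2) * ι R (x 3)

variable (R) in
/-- The bivector `φ₂ = x₁∧x₅ + x₂∧x₃ + x₄∧x₆` through which the affine line passes, with indices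
shifted to start from `0`. -/
def lineBasePoint (x : Fin 6 → M) : ExteriorAlgebra R M :=
  ι R (x 0) * ι R (x 4) + ι R (x 1) * ι R (x 2) + ι R (x 3) * ι R (x 5)

theorem lineDirection_sq (x : Fin 6 → M) :
    lineDirection R x ^ 2 = (2 : R) • (ι R (x 0) * ι R (x 1) * (ι R (x 2) * ι R (x 3))) := by
  simpa [lineDirection, ← Nat.cast_smul_eq_nsmul R] using
    sum_ι_mul_ι_pow_length (R := R) [(x 0, x 1), (x 2, x 3)]

theorem lineDirection_cube (x : Fin 6 → M) : lineDirection R x ^ 3 = 0 := by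
  simpa [lineDirection] using
    sum_ι_mul_ι_pow_length_succ_eq_zero (R := R) [(x 0, x 1), (x 2, x 3)]

theorem lineDirection_sq_mul (x : Fin 6 → M) :
    lineDirection R x ^ 2 * (ι R (x 4) * ι R (x 5)) = (2 : R) • ιMulti R 6 x := by
  rw [lineDirection_sq, smul_mul_assoc, ιMulti_apply]
  simp [List.ofFn_succ, mul_assoc]

theorem smul_lineDirection_add_lineBasePoint (x : Fin 6 → M) (α : R) :
    α • lineDirection R x + lineBasePoint R x =
      ι R (x 0) * ι R (x 4 + α • x 1) + ι R (x 1) * ι R (x 2) +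
        ι R (x 3) * ι R (x 5 - α • x 2) := by
  simp only [lineDirection, lineBasePoint, map_add, map_sub, map_smul, mul_add, mul_sub,
    mul_smul_comm, ι_mul_ι_eq_neg (x 2) (x 3)]
  module

theorem lineSummands_prod (x : Fin 6 → M) (α : R) :
    ι R (x 0) * ι R (x 4 + α • x 1) * (ι R (x 1) * ι R (x 2)) *
        (ι R (x 3) * ι R (x 5 - α • x 2)) = -ιMulti R 6 x := by
  have hleft : ι R (x 4 + α • x 1) * (ι R (x 1) * ι R (x 2)) =
      ι R (x 4) * (ι R (x 1) * ι R (x 2)) := by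
    rw [map_add, map_smul, add_mul, smul_mul_assoc, ← mul_assoc (ι R (x 1)), ι_sq_zero, zero_mul,
      smul_zero, add_zero]
  have hright : ι R (x 2) * (ι R (x 3) * ι R (x 5 - α • x 2)) =
      ι R (x 2) * (ι R (x 3) * ι R (x 5)) := by
    rw [map_sub, map_smul, mul_sub, mul_sub, mul_smul_comm, mul_smul_comm,
      ← mul_assoc _ _ (ι R (x 2)), ι_mul_mul_ι_self, smul_zero, sub_zero]
  calc
    _ = ι R (x 0) * (ι R (x 4) * (ι R (x 1) * ι R (x 2))) * (ι R (x 3) * ι R (x 5)) := by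
      rw [mul_assoc (ι R (x 0)), hleft]
      simp only [mul_assoc, hright]
    _ = ι R (x 0) * (ι R (x 1) * ι R (x 2)) * (ι R (x 4) * ι R (x 3)) * ι R (x 5) := by
      rw [← (commute_ι_mul_ι (x 1) (x 2) (ι R (x 4))).eq]
      simp only [mul_assoc]
    _ = -ιMulti R 6 x := by
      rw [ι_mul_ι_eq_neg (x 4), ιMulti_apply]
      simp [List.ofFn_succ, mul_assoc]

theorem smul_lineDirection_add_lineBasePoint_cube (x : Fin 6 → M) (α : R) :
    (α • lineDirection R x + lineBasePoint R x) ^ 3 = (-6 : R) • ιMulti R 6 x := by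
  calc
    _ = (6 : R) • (ι R (x 0) * ι R (x 4 + α • x 1) * (ι R (x 1) * ι R (x 2)) *
        (ι R (x 3) * ι R (x 5 - α • x 2))) := by
      rw [smul_lineDirection_add_lineBasePoint]
      simpa [Nat.factorial, ← Nat.cast_smul_eq_nsmul R, add_assoc, mul_assoc] using
        sum_ι_mul_ι_pow_length (R := R) [(x 0, x 4 + α • x 1), (x 1, x 2), (x 3, x 5 - α • x 2)]
    _ = (-6 : R) • ιMulti R 6 x := by rw [lineSummands_prod, smul_neg, neg_smul]

end AffineLine

theorem affine_line_rank_six_general {R M : Type*} [CommRing R] [AddCommGroup M] [Module R M]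
    (h6 : (6 : R) ≠ 0) (x : Module.Basis (Fin 6) R M) :
    (∀ α : R, (α • lineDirection R x + lineBasePoint R x) ^ 3 ≠ 0) ∧
      lineDirection R x ^ 3 = 0 ∧ lineDirection R x ^ 2 ≠ 0 := by
  refine ⟨fun α hcube => ?_, lineDirection_cube x, fun hsq => ?_⟩
  · rw [smul_lineDirection_add_lineBasePoint_cube, smul_ιMulti_basis_eq_zero_iff] at hcube
    exact h6 (neg_eq_zero.1 hcube)
  · have h2 : (2 : R) • ιMulti R 6 x = 0 := by rw [← lineDirection_sq_mul, hsq, zero_mul]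
    rw [smul_ιMulti_basis_eq_zero_iff] at h2
    exact h6 (by linear_combination 3 * h2)

/-- For `φ₁ = x₁∧x₂ + x₃∧x₄` and `φ₂ = x₁∧x₅ + x₂∧x₃ + x₄∧x₆` (dim W = 6), every
bivector on the affine line `φ₂ + kφ₁` has rank 6 (nonvanishing cube), while `φ₁` has
rank 4 (vanishing cube but nonvanishing square). -/
theorem affine_line_rank_six
    {k : Type*} [Field k] [CharZero k] :
    let e : Fin 6 → (Fin 6 → k) := fun i => Pi.single i 1
    let φ₁ : ExteriorAlgebra k (Fin 6 → k) := ι k (e 0) * ι k (e 1) + ι k (e 2) * ι k (e 3)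
    let φ₂ : ExteriorAlgebra k (Fin 6 → k) :=
      ι k (e 0) * ι k (e 4) + ι k (e 1) * ι k (e 2) + ι k (e 3) * ι k (e 5)
    (∀ α : k, (α • φ₁ + φ₂) * (α • φ₁ + φ₂) * (α • φ₁ + φ₂) ≠ 0) ∧
      φ₁ * φ₁ * φ₁ = 0 ∧ φ₁ * φ₁ ≠ 0 := by
  simpa only [lineDirection, lineBasePoint, Pi.basisFun_apply, pow_three', sq] using
    affine_line_rank_six_general (R := k) (by norm_num) (Pi.basisFun k (Fin 6))
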